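/- Brothers–Marcellini-type non-uniqueness on the disk: let Ω = B(0,1) ⊂ ℝ², Γ = {(x,y) ∈ ∂Ω : |y| > 1/√2}, f = 0 on {y < −1/√2}, f = 1 on {y > 1/√2}. For each λ ∈ [0,1], the function u_λ equal to 0 for y < −1/√2, λ for |y| < 1/√2, and 1 for y > 1/√2, together with the vector field z = (0,1) on {|x| < 1/√2} and z = (0,0) on {|x| > 1/√2}, satisfies all four conditions of the 1-Laplace formulation: |z| ≤ 1, div z = 0 in D'(Ω), (z,Du_λ) = |Du_λ| as measures, [z,ν] ∈ sign(f−u_λ) on Γ, [z,ν] = 0 on ∂Ω∖Γ. -/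

import Mathlib

open Set MeasureTheory Filter Topology
open scoped RealInnerProductSpace Classical

abbrev E2 := EuclideanSpace ℝ (Fin 2)

/-- `z` is divergence-free in `𝒟'(Ω)`. -/
def DivFreeOn (Ω : Set E2) (z : E2 → E2) : Prop :=
  ∀ ϕ : E2 → ℝ, ContDiff ℝ (⊤ : ℕ∞) ϕ → HasCompactSupport ϕ →
    tsupport ϕ ⊆ Ω → ∫ x in Ω, ⟪z x, gradient ϕ x⟫ = 0

/-- The divergence of a vector field on `ℝ²`. -/
noncomputable def div2 (w : E2 → E2) (x : E2) : ℝ :=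
  ∑ i : Fin 2, fderiv ℝ w x (EuclideanSpace.single i 1) i


lemma exists_cut {K A : Set E2} (hK : IsCompact K) (hA : IsOpen A) (hKA : K ⊆ A) :
    ∃ ϕ : E2 → ℝ, ContDiff ℝ (⊤ : ℕ∞) ϕ ∧ HasCompactSupport ϕ ∧ tsupport ϕ ⊆ A ∧
      (∀ x, 0 ≤ ϕ x) ∧ (∀ x, ϕ x ≤ 1) ∧ ∀ x ∈ K, ϕ x = 1 := by
  obtain ⟨L, hL, hKL, hLA⟩ := exists_compact_between hK hA hKA
  obtain ⟨f, h0, h1, h01⟩ := exists_contMDiffMap_zero_one_of_isClosed (n := (⊤ : ℕ∞))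
    (modelWithCornersSelf ℝ E2) (s := (interior L)ᶜ) (t := K) isOpen_interior.isClosed_compl
    hK.isClosed (by
      rw [Set.disjoint_left]; intro x hx hx2; exact hx (hKL hx2))
  have hs : tsupport f ⊆ L := by
    apply closure_minimal _ hL.isClosed
    intro x hx
    by_contra hxL
    exact hx (h0 (fun h => hxL (interior_subset h)))
  refine ⟨f, f.contMDiff.contDiff, hL.of_isClosed_subset (isClosed_tsupport _) hs, hs.trans hLA,
    fun x => (h01 x).1, fun x => (h01 x).2, fun x hx => h1 hx⟩

lemma measure_open_le {ν : Measure E2} {A : Set E2} (hA : IsOpen A) (C : ENNReal)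
    (h : ∀ K : Set E2, IsCompact K → K ⊆ A → ν K ≤ C) : ν A ≤ C := by
  obtain ⟨F, hF, hFA, hU, hm⟩ := hA.exists_iUnion_isClosed
  let G : ℕ → Set E2 := fun n => F n ∩ Metric.closedBall 0 n
  have hG : A = ⋃ n, G n := by
    rw [← hU]
    ext x
    simp only [mem_iUnion, G, mem_inter_iff, mem_closedBall_zero_iff]
    constructor
    · rintro ⟨n, hn⟩
      obtain ⟨m, hm'⟩ := exists_nat_ge ‖x‖
      refine ⟨max n m, hm (le_max_left _ _) hn, hm'.trans (by exact_mod_cast le_max_right _ _)⟩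
    · rintro ⟨n, hn, _⟩; exact ⟨n, hn⟩
  have hGm : Monotone G := fun a b hab =>
    inter_subset_inter (hm hab) (Metric.closedBall_subset_closedBall (by exact_mod_cast hab))
  rw [hG, hGm.measure_iUnion]
  refine iSup_le fun n => h _ ?_ ?_
  · exact (isCompact_closedBall _ _).inter_left (hF n)
  · exact inter_subset_left.trans (hFA n)

lemma measure_open_le_of_integral {μ ν : Measure E2} {Ω : Set E2} 
    (h : ∀ ϕ : E2 → ℝ, ContDiff ℝ (⊤ : ℕ∞) ϕ → HasCompactSupport ϕ → tsupport ϕ ⊆ Ω →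
      (∀ x, 0 ≤ ϕ x) → (∀ x, ϕ x ≤ 1) → Integrable ϕ μ ∧ Integrable ϕ ν ∧
        ∫ x, ϕ x ∂μ = ∫ x, ϕ x ∂ν) {A : Set E2} (hA : IsOpen A) (hAΩ : A ⊆ Ω) :
    μ A ≤ ν A := by
  apply measure_open_le hA
  intro K hK hKA
  obtain ⟨ϕ, h1, h2, h3, h4, h5, h6⟩ := exists_cut hK hA hKA
  obtain ⟨i1, i2, i3⟩ := h ϕ h1 h2 (h3.trans hAΩ) h4 h5
  have e1 := ofReal_integral_eq_lintegral_ofReal i1 (Eventually.of_forall h4)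
  have e2 := ofReal_integral_eq_lintegral_ofReal i2 (Eventually.of_forall h4)
  calc μ K = ∫⁻ x, K.indicator 1 x ∂μ := (lintegral_indicator_one hK.measurableSet).symm
    _ ≤ ∫⁻ x, ENNReal.ofReal (ϕ x) ∂μ := by
        apply lintegral_mono
        intro x
        by_cases hx : x ∈ K
        · simp [hx, h6 x hx]
        · simp [hx]
    _ = ∫⁻ x, ENNReal.ofReal (ϕ x) ∂ν := by rw [← e1, ← e2, i3]
    _ ≤ ∫⁻ x, A.indicator 1 x ∂ν := by
        apply lintegral_mono
        intro x
        by_cases hx : x ∈ A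
        · simp [hx, h5 x]
        · have : ϕ x = 0 := image_eq_zero_of_notMem_tsupport (fun hh => hx (h3 hh))
          simp [hx, this]
    _ = ν A := lintegral_indicator_one hA.measurableSet

lemma measure_eq_of_open {μ ν : Measure E2} {Ω : Set E2} (hΩ : IsOpen Ω) (hfin : μ Ω < ⊤)
    (h : ∀ A, IsOpen A → A ⊆ Ω → μ A = ν A) {A : Set E2} (hA : MeasurableSet A) (hAΩ : A ⊆ Ω) :
    μ A = ν A := by
  have : μ.restrict Ω = ν.restrict Ω := by
    have : IsFiniteMeasure (μ.restrict Ω) := ⟨by simpa using hfin⟩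
    refine ext_of_generate_finite {s | IsOpen s} (BorelSpace.measurable_eq) isPiSystem_isOpen ?_ ?_
    · intro s (hs : IsOpen s)
      rw [Measure.restrict_apply hs.measurableSet, Measure.restrict_apply hs.measurableSet]
      exact h _ (hs.inter hΩ) inter_subset_right
    · simpa using h Ω hΩ subset_rfl
  have h2 := congrArg (fun m => m A) this
  simpa [Measure.restrict_apply hA, inter_eq_left.mpr hAΩ] using h2

/-- the map to the Euclidean plane -/
noncomputable def PP (a b : ℝ) : E2 := !₂[a, b]

@[simp] lemma PP0 (a b : ℝ) : PP a b 0 = a := by simp [PP]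
@[simp] lemma PP1 (a b : ℝ) : PP a b 1 = b := by simp [PP]
lemma PP_eta (p : E2) : PP (p 0) (p 1) = p := by
  ext i; fin_cases i <;> simp [PP]

lemma PP_eq (a b : ℝ) : PP a b = a • EuclideanSpace.single (0 : Fin 2) (1:ℝ) +
    b • EuclideanSpace.single (1 : Fin 2) (1:ℝ) := by
  ext i; fin_cases i <;> simp [PP]

lemma PP_mp : MeasurePreserving (fun q : ℝ × ℝ => PP q.1 q.2) :=
  (PiLp.volume_preserving_toLp (Fin 2)).comp (volume_preserving_finTwoArrow ℝ).symm

lemma PP_cont : Continuous (fun q : ℝ × ℝ => PP q.1 q.2) := by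
  simp only [PP_eq]; fun_prop

lemma PP_emb : MeasurableEmbedding (fun q : ℝ × ℝ => PP q.1 q.2) := by
  have h : MeasurableEmbedding (fun q : ℝ × ℝ =>
      (MeasurableEquiv.toLp 2 (Fin 2 → ℝ)) ((MeasurableEquiv.finTwoArrow (α := ℝ)).symm q)) :=
    (MeasurableEquiv.toLp 2 (Fin 2 → ℝ)).measurableEmbedding.comp
      (MeasurableEquiv.finTwoArrow (α := ℝ)).symm.measurableEmbedding
  exact h

lemma fub {F : E2 → ℝ} (hF : Integrable F) : ∫ p, F p = ∫ x, ∫ y, F (PP x y) := by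
  rw [← PP_mp.integral_comp PP_emb]
  exact integral_prod _ ((PP_mp.integrable_comp_emb PP_emb).2 hF)

lemma fub' {F : E2 → ℝ} (hF : Integrable F) : ∫ p, F p = ∫ y, ∫ x, F (PP x y) := by
  rw [← PP_mp.integral_comp PP_emb]
  exact integral_prod_symm _ ((PP_mp.integrable_comp_emb PP_emb).2 hF)

lemma hasDerivAt_PP1 {g : E2 → ℝ} (hg : ContDiff ℝ 1 g) (x y : ℝ) :
    HasDerivAt (fun t => g (PP x t)) (fderiv ℝ g (PP x y) (EuclideanSpace.single 1 1)) y := by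
  have h1 : HasDerivAt (fun t => PP x t) (EuclideanSpace.single (1 : Fin 2) (1:ℝ)) y := by
    simp only [PP_eq]
    simpa using ((hasDerivAt_id y).smul_const (EuclideanSpace.single (1 : Fin 2) (1:ℝ))).const_add
      (x • EuclideanSpace.single (0 : Fin 2) (1:ℝ))
  exact ((hg.differentiable one_ne_zero (PP x y)).hasFDerivAt).comp_hasDerivAt y h1

lemma hasDerivAt_PP0 {g : E2 → ℝ} (hg : ContDiff ℝ 1 g) (x y : ℝ) :
    HasDerivAt (fun t => g (PP t y)) (fderiv ℝ g (PP x y) (EuclideanSpace.single 0 1)) x := by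
  have h1 : HasDerivAt (fun t => PP t y) (EuclideanSpace.single (0 : Fin 2) (1:ℝ)) x := by
    simp only [PP_eq]
    simpa using ((hasDerivAt_id x).smul_const (EuclideanSpace.single (0 : Fin 2) (1:ℝ))).add_const
      (y • EuclideanSpace.single (1 : Fin 2) (1:ℝ))
  exact ((hg.differentiable one_ne_zero (PP x y)).hasFDerivAt).comp_hasDerivAt x h1

lemma PP_isom1 (x : ℝ) : Topology.IsClosedEmbedding (fun t => PP x t) := by
  apply Isometry.isClosedEmbedding
  apply Isometry.of_dist_eq
  intro a b
  simp [EuclideanSpace.dist_eq, Real.dist_eq, Real.sqrt_sq_eq_abs]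

lemma PP_isom0 (y : ℝ) : Topology.IsClosedEmbedding (fun t => PP t y) := by
  apply Isometry.isClosedEmbedding
  apply Isometry.of_dist_eq
  intro a b
  simp [EuclideanSpace.dist_eq, Real.dist_eq, Real.sqrt_sq_eq_abs]

lemma contDiff_PP1 {g : E2 → ℝ} (hg : ContDiff ℝ 1 g) (x : ℝ) :
    ContDiff ℝ 1 (fun t => g (PP x t)) := by
  simp only [PP_eq]; fun_prop

lemma contDiff_PP0 {g : E2 → ℝ} (hg : ContDiff ℝ 1 g) (y : ℝ) :
    ContDiff ℝ 1 (fun t => g (PP t y)) := by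
  simp only [PP_eq]; fun_prop

lemma integral_deriv_zero {k : ℝ → ℝ} (hk : ContDiff ℝ 1 k) (hs : HasCompactSupport k) :
    ∫ t, deriv k t = 0 := by
  have hi : Integrable (deriv k) := (hk.continuous_deriv le_rfl).integrable_of_hasCompactSupport hs.deriv
  rw [← integral_add_compl (measurableSet_Iic (a := (0:ℝ))) hi, compl_Iic,
    hs.integral_Iic_deriv_eq hk, hs.integral_Ioi_deriv_eq hk]
  ring

/-- directional derivative continuity -/
lemma cont_d {g : E2 → ℝ} (hg : ContDiff ℝ 1 g) (e : E2) : Continuous (fun p => fderiv ℝ g p e) :=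
  (hg.continuous_fderiv one_ne_zero).clm_apply continuous_const

lemma supp_d {g : E2 → ℝ} (hs : HasCompactSupport g) (e : E2) :
    HasCompactSupport (fun p => fderiv ℝ g p e) := hs.fderiv_apply (𝕜 := ℝ) e

lemma integrable_d {g : E2 → ℝ} (hg : ContDiff ℝ 1 g) (hs : HasCompactSupport g) (e : E2)
    {h : E2 → ℝ} (hh : Measurable h) (C : ℝ) (hb : ∀ p, |h p| ≤ C) :
    Integrable (fun p => h p * fderiv ℝ g p e) := by
  apply Integrable.bdd_mul (c := C)
  · exact (cont_d hg e).integrable_of_hasCompactSupport (supp_d hs e)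
  · exact hh.aestronglyMeasurable
  · exact Eventually.of_forall hb

lemma measurable_coord (i : Fin 2) : Measurable (fun p : E2 => p i) :=
  (by fun_prop : Continuous (fun p : E2 => p i)).measurable

lemma key1 {g : E2 → ℝ} (hg : ContDiff ℝ 1 g) (hs : HasCompactSupport g)
    {h U : ℝ → ℝ} (hh : Measurable h) (hU : Measurable U) (hhb : ∀ x, |h x| ≤ 1)
    (hUb : ∀ x, |U x| ≤ 1) (L : (ℝ → ℝ) → ℝ)
    (hL : ∀ k : ℝ → ℝ, ContDiff ℝ 1 k → HasCompactSupport k → ∫ y, U y * deriv k y = L k) :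
    ∫ p : E2, (h (p 0) * U (p 1)) * fderiv ℝ g p (EuclideanSpace.single 1 1)
      = ∫ x, h x * L (fun y => g (PP x y)) := by
  rw [fub]
  · congr 1; ext x
    simp only [PP0, PP1, mul_assoc]
    rw [integral_const_mul, ← hL _ (contDiff_PP1 hg x) (hs.comp_isClosedEmbedding (PP_isom1 x))]
    congr 2; ext y
    rw [(hasDerivAt_PP1 hg x y).deriv]
  · apply integrable_d hg hs _ _ 1
    · intro p
      rw [abs_mul]
      exact mul_le_one₀ (hhb _) (abs_nonneg _) (hUb _)
    · exact (hh.comp (measurable_coord 0)).mul (hU.comp (measurable_coord 1))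

lemma key0 {g : E2 → ℝ} (hg : ContDiff ℝ 1 g) (hs : HasCompactSupport g)
    {U : ℝ → ℝ} (hU : Measurable U) (hUb : ∀ x, |U x| ≤ 1) :
    ∫ p : E2, U (p 1) * fderiv ℝ g p (EuclideanSpace.single 0 1) = 0 := by
  rw [fub']
  · have : ∀ y, ∫ x, U (PP x y 1) * fderiv ℝ g (PP x y) (EuclideanSpace.single 0 1) = 0 := by
      intro y
      simp only [PP1]
      rw [integral_const_mul]
      have := integral_deriv_zero (contDiff_PP0 hg y) (hs.comp_isClosedEmbedding (PP_isom0 y))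
      simp only [(hasDerivAt_PP0 hg _ y).deriv] at this
      rw [this, mul_zero]
    rw [integral_congr_ae (Eventually.of_forall this), integral_zero]
  · apply integrable_d hg hs _ _ 1
    · exact fun p => hUb _
    · exact (hU.comp (measurable_coord 1))


/-- the constant `1/√2` -/
noncomputable def cc : ℝ := (Real.sqrt 2)⁻¹

lemma cc_pos : 0 < cc := by unfold cc; positivity
lemma cc_sq : cc ^ 2 = 1 / 2 := by
  unfold cc; rw [inv_pow, Real.sq_sqrt (by norm_num)]; norm_num

/-- the profile of `u` -/
noncomputable def UU (lam : ℝ) (y : ℝ) : ℝ := if y < -cc then 0 else if y ≤ cc then lam else 1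

lemma UU_meas (lam : ℝ) : Measurable (UU lam) := by
  unfold UU
  exact Measurable.ite measurableSet_Iio measurable_const
    (Measurable.ite measurableSet_Iic measurable_const measurable_const)

lemma UU_bd {lam : ℝ} (hlam : lam ∈ Icc (0:ℝ) 1) (y : ℝ) : |UU lam y| ≤ 1 := by
  unfold UU
  split_ifs
  · simp
  · rw [abs_le]; constructor <;> linarith [hlam.1, hlam.2]
  · simp

lemma UU_int (lam : ℝ) (k : ℝ → ℝ) (hk : ContDiff ℝ 1 k) (hs : HasCompactSupport k) :
    ∫ y, UU lam y * deriv k y = -(lam * k (-cc) + (1 - lam) * k cc) := by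
  have hi : Integrable (deriv k) :=
    (hk.continuous_deriv le_rfl).integrable_of_hasCompactSupport hs.deriv
  have e : (fun y => UU lam y * deriv k y) = fun y =>
      lam * (Ici (-cc)).indicator (deriv k) y + (1 - lam) * (Ioi cc).indicator (deriv k) y := by
    ext y
    have := cc_pos
    unfold UU
    simp only [indicator, mem_Ici, mem_Ioi]
    split_ifs <;> first | ring1 | (exfalso; linarith)
  rw [e, integral_add, integral_const_mul, integral_const_mul, integral_indicator measurableSet_Ici,
    integral_indicator measurableSet_Ioi, integral_Ici_eq_integral_Ioi,
    hs.integral_Ioi_deriv_eq hk, hs.integral_Ioi_deriv_eq hk]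
  · ring
  · exact (hi.indicator measurableSet_Ici).const_mul _
  · exact (hi.indicator measurableSet_Ioi).const_mul _

/-- pushforward of Lebesgue measure on `(-c,c)` -/
noncomputable def seg (γ : ℝ → E2) : Measure E2 := (volume.restrict (Ioo (-cc) cc)).map γ

instance (γ : ℝ → E2) : IsFiniteMeasure (seg γ) := by
  unfold seg; infer_instance

/-- the measure `|Du|` -/
noncomputable def mu (lam : ℝ) : Measure E2 :=
  ENNReal.ofReal lam • seg (fun x => PP x (-cc)) + ENNReal.ofReal (1 - lam) • seg (fun x => PP x cc)

instance (lam : ℝ) : IsFiniteMeasure (mu lam) := by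
  constructor
  unfold mu
  simp only [Measure.coe_add, Measure.coe_smul, Pi.add_apply, Pi.smul_apply, smul_eq_mul]
  exact ENNReal.add_lt_top.2 ⟨ENNReal.mul_lt_top ENNReal.ofReal_lt_top (measure_lt_top _ _),
    ENNReal.mul_lt_top ENNReal.ofReal_lt_top (measure_lt_top _ _)⟩

lemma seg_integral {γ : ℝ → E2} (hγ : Continuous γ) {g : E2 → ℝ} (hg : Continuous g) :
    ∫ p, g p ∂(seg γ) = ∫ x in Ioo (-cc) cc, g (γ x) := by
  unfold seg
  rw [integral_map hγ.aemeasurable hg.aestronglyMeasurable]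

lemma PPc0 (y : ℝ) : Continuous (fun x => PP x y) := (PP_isom0 y).continuous

lemma mu_integral {lam : ℝ} (hlam : lam ∈ Icc (0:ℝ) 1) {g : E2 → ℝ} (hg : Continuous g)
    (hs : HasCompactSupport g) :
    ∫ p, g p ∂(mu lam) = lam * (∫ x in Ioo (-cc) cc, g (PP x (-cc))) +
      (1 - lam) * ∫ x in Ioo (-cc) cc, g (PP x cc) := by
  unfold mu
  rw [integral_add_measure, integral_smul_measure, integral_smul_measure,
    seg_integral (PPc0 _) hg, seg_integral (PPc0 _) hg, ENNReal.toReal_ofReal hlam.1,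
    ENNReal.toReal_ofReal (by linarith [hlam.2])]
  · rfl
  · exact (hg.integrable_of_hasCompactSupport hs).smul_measure ENNReal.ofReal_ne_top
  · exact (hg.integrable_of_hasCompactSupport hs).smul_measure ENNReal.ofReal_ne_top

lemma PP_mem_ball (x y : ℝ) : PP x y ∈ Metric.ball (0 : E2) 1 ↔ x ^ 2 + y ^ 2 < 1 := by
  rw [mem_ball_zero_iff, EuclideanSpace.norm_eq, Real.sqrt_lt' one_pos]
  simp

lemma key_mu {lam : ℝ} (hlam : lam ∈ Icc (0:ℝ) 1) {g : E2 → ℝ} (hg : ContDiff ℝ 1 g)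
    (hs : HasCompactSupport g) (hsub : tsupport g ⊆ Metric.ball (0 : E2) 1) {h : ℝ → ℝ}
    (hh : Measurable h) (hhb : ∀ x, |h x| ≤ 1) (h1 : ∀ x, |x| < cc → h x = 1) :
    ∫ p : E2, (h (p 0) * UU lam (p 1)) * fderiv ℝ g p (EuclideanSpace.single 1 1)
      = -∫ p, g p ∂(mu lam) := by
  rw [key1 hg hs hh (UU_meas lam) hhb (UU_bd hlam) (fun k => -(lam * k (-cc) + (1 - lam) * k cc))
    (UU_int lam), mu_integral hlam hg.continuous hs]
  have hz : ∀ x y, x ∉ Ioo (-cc) cc → y ^ 2 = 1 / 2 → g (PP x y) = 0 := by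
    intro x y hx hy
    apply image_eq_zero_of_notMem_tsupport
    intro hh
    have := (PP_mem_ball x y).1 (hsub hh)
    apply hx
    have h2 : x ^ 2 < cc ^ 2 := by rw [cc_sq]; linarith
    exact abs_lt.1 (abs_lt_of_sq_lt_sq h2 cc_pos.le)
  have hi : ∀ y, IntegrableOn (fun x => g (PP x y)) (Ioo (-cc) cc) := fun y =>
    ((hg.continuous.comp (PPc0 y)).integrable_of_hasCompactSupport
      (hs.comp_isClosedEmbedding (PP_isom0 y))).integrableOn
  rw [← setIntegral_eq_integral_of_forall_compl_eq_zero (s := Ioo (-cc) cc)]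
  · rw [setIntegral_congr_fun (g := fun x => -(lam * g (PP x (-cc)) + (1 - lam) * g (PP x cc)))
      measurableSet_Ioo]
    · rw [integral_neg, integral_add ((hi _).const_mul _) ((hi _).const_mul _),
        integral_const_mul, integral_const_mul]
    · intro x hx
      simp only
      rw [h1 x (abs_lt.2 hx), one_mul]
  · intro x hx
    simp only
    rw [hz x _ hx (by rw [neg_sq, cc_sq]), hz x _ hx cc_sq]
    simp

/-- the indicator of `|x| < c` -/
noncomputable def hI (x : ℝ) : ℝ := if |x| < cc then 1 else 0

lemma hI_meas : Measurable hI := by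
  unfold hI
  exact Measurable.ite (measurableSet_lt (by fun_prop) measurable_const) measurable_const measurable_const

lemma hI_bd (x : ℝ) : |hI x| ≤ 1 := by unfold hI; split_ifs <;> simp

/-- the field `z` -/
noncomputable def zz : E2 → E2 := fun p => if |p 0| < (Real.sqrt 2)⁻¹ then
      EuclideanSpace.single (1 : Fin 2) (1:ℝ) else 0

lemma inner_zz (v : E2 → ℝ) (p : E2) :
    ⟪zz p, gradient v p⟫ = hI (p 0) * fderiv ℝ v p (EuclideanSpace.single 1 1) := by
  rw [inner_gradient_right]
  unfold zz hI cc
  split_ifs <;> simp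

lemma fderiv_zero_off {g : E2 → ℝ} {A : Set E2} (hsub : tsupport g ⊆ A) {p : E2} (hp : p ∉ A) :
    fderiv ℝ g p = 0 := by
  apply image_eq_zero_of_notMem_tsupport
  intro h
  exact hp (hsub (tsupport_fderiv_subset ℝ h))

lemma divfree : DivFreeOn (Metric.ball (0 : E2) 1) zz := by
  intro ϕ h1 h2 h3
  have h1' : ContDiff ℝ 1 ϕ := h1.of_le (by exact_mod_cast le_top)
  rw [setIntegral_eq_integral_of_forall_compl_eq_zero]
  · simp only [inner_zz]
    have := key1 h1' h2 hI_meas (U := fun _ => 1) measurable_const hI_bd (by simp) (fun _ => 0)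
      (fun k hk hs => by simpa using integral_deriv_zero hk hs)
    simpa using this
  · intro p hp
    rw [inner_zz, fderiv_zero_off h3 hp]; simp

lemma pairing {lam : ℝ} (hlam : lam ∈ Icc (0:ℝ) 1) {ϕ : E2 → ℝ} (h1 : ContDiff ℝ (⊤ : ℕ∞) ϕ)
    (h2 : HasCompactSupport ϕ) (h3 : tsupport ϕ ⊆ Metric.ball (0 : E2) 1) :
    -∫ p in Metric.ball (0 : E2) 1, UU lam (p 1) * ⟪zz p, gradient ϕ p⟫ = ∫ p, ϕ p ∂(mu lam) := by
  have h1' : ContDiff ℝ 1 ϕ := h1.of_le (by exact_mod_cast le_top)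
  rw [setIntegral_eq_integral_of_forall_compl_eq_zero]
  · rw [neg_eq_iff_eq_neg, ← key_mu hlam h1' h2 h3 hI_meas hI_bd (fun x hx => by simp [hI, hx])]
    congr 1; ext p
    rw [inner_zz]; ring
  · intro p hp
    rw [inner_zz, fderiv_zero_off h3 hp]; simp

lemma div2_eq {w : E2 → E2} (hw : ContDiff ℝ 1 w) (p : E2) :
    div2 w p = fderiv ℝ (fun q => w q 0) p (EuclideanSpace.single 0 1) +
      fderiv ℝ (fun q => w q 1) p (EuclideanSpace.single 1 1) := by
  have hd := (hw.differentiable one_ne_zero p).hasFDerivAt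
  have h : ∀ i : Fin 2, ∀ e, fderiv ℝ (fun q => w q i) p e = fderiv ℝ w p e i := by
    intro i e
    have := ((EuclideanSpace.proj (𝕜 := ℝ) i : E2 →L[ℝ] ℝ).hasFDerivAt (x := w p)).comp p hd
    have h2 : HasFDerivAt (fun q => w q i) _ p := this
    rw [h2.fderiv]; simp
  rw [div2, Fin.sum_univ_two, h, h]

lemma tv_int {lam : ℝ} (hlam : lam ∈ Icc (0:ℝ) 1) {w : E2 → E2} (hw : ContDiff ℝ 1 w)
    (hs : HasCompactSupport w) {A : Set E2} (hA : A ⊆ Metric.ball (0 : E2) 1)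
    (hsub : tsupport w ⊆ A) :
    ∫ p in A, UU lam (p 1) * div2 w p = -∫ p, w p 1 ∂(mu lam) := by
  have hc : ∀ i : Fin 2, ContDiff ℝ 1 (fun q => w q i) := by
    intro i
    exact (EuclideanSpace.proj (𝕜 := ℝ) i : E2 →L[ℝ] ℝ).contDiff.comp hw
  have hsu : ∀ i : Fin 2, tsupport (fun q => w q i) ⊆ tsupport w := by
    intro i
    apply closure_mono
    intro q hq hh
    apply hq
    simp [hh]
  have hcs : ∀ i : Fin 2, HasCompactSupport (fun q => w q i) := fun i =>
    hs.of_isClosed_subset (isClosed_tsupport _) (hsu i)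
  rw [setIntegral_eq_integral_of_forall_compl_eq_zero]
  · simp only [div2_eq hw, mul_add]
    rw [integral_add, key0 (hc 0) (hcs 0) (UU_meas lam) (UU_bd hlam), zero_add,
      ← key_mu hlam (hc 1) (hcs 1) ((hsu 1).trans (hsub.trans hA)) (h := fun _ => 1)
        measurable_const (by simp) (by simp)]
    · simp
    · exact integrable_d (hc 0) (hcs 0) _ ((UU_meas lam).comp (measurable_coord 1)) 1
        (fun p => UU_bd hlam _)
    · exact integrable_d (hc 1) (hcs 1) _ ((UU_meas lam).comp (measurable_coord 1)) 1
        (fun p => UU_bd hlam _)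
  · intro p hp
    rw [div2_eq hw, fderiv_zero_off ((hsu 0).trans hsub) hp,
      fderiv_zero_off ((hsu 1).trans hsub) hp]
    simp

lemma tv_eq {lam : ℝ} (hlam : lam ∈ Icc (0:ℝ) 1) {A : Set E2} (hAo : IsOpen A)
    (hA : A ⊆ Metric.ball (0 : E2) 1) :
    (⨆ w : {w : E2 → E2 // ContDiff ℝ 1 w ∧ HasCompactSupport w ∧
          tsupport w ⊆ A ∧ ∀ x, ‖w x‖ ≤ 1},
        ENNReal.ofReal (∫ x in A, UU lam (x 1) * div2 w.1 x)) = mu lam A := by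
  apply le_antisymm
  · refine iSup_le ?_
    rintro ⟨w, hw, hs, hsub, hb⟩
    simp only
    rw [tv_int hlam hw hs hA hsub]
    have h1 : ∀ p, |w p 1| ≤ A.indicator (fun _ => (1:ℝ)) p := by
      intro p
      by_cases hp : p ∈ A
      · simp only [hp, indicator_of_mem]
        exact (PiLp.norm_apply_le (w p) 1).trans (hb p)
      · have : w p = 0 := image_eq_zero_of_notMem_tsupport (fun h => hp (hsub h))
        simp [hp, this]
    apply ENNReal.ofReal_le_of_le_toReal
    calc -∫ p, w p 1 ∂(mu lam) ≤ |∫ p, w p 1 ∂(mu lam)| := neg_le_abs _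
      _ ≤ ∫ p, |w p 1| ∂(mu lam) := abs_integral_le_integral_abs
      _ ≤ ∫ p, A.indicator (fun _ => (1:ℝ)) p ∂(mu lam) := by
          apply integral_mono_of_nonneg
          · exact Eventually.of_forall fun p => abs_nonneg _
          · exact (integrable_const _).indicator hAo.measurableSet
          · exact Eventually.of_forall h1
      _ = (mu lam A).toReal := by
          rw [integral_indicator hAo.measurableSet]; simp [Measure.real]
  · apply measure_open_le hAo
    intro K hK hKA
    obtain ⟨ϕ, h1, h2, h3, h4, h5, h6⟩ := exists_cut hK hAo hKA
    have h1' : ContDiff ℝ 1 ϕ := h1.of_le (by exact_mod_cast le_top)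
    have hsu : tsupport (fun p => (-ϕ p) • EuclideanSpace.single (1 : Fin 2) (1:ℝ)) ⊆ tsupport ϕ := by
      apply closure_mono
      intro q hq hh
      apply hq
      simp [hh]
    let w : {w : E2 → E2 // ContDiff ℝ 1 w ∧ HasCompactSupport w ∧
          tsupport w ⊆ A ∧ ∀ x, ‖w x‖ ≤ 1} :=
      ⟨fun p => (-ϕ p) • EuclideanSpace.single (1 : Fin 2) (1:ℝ), by fun_prop,
        h2.of_isClosed_subset (isClosed_tsupport _) hsu, hsu.trans h3, by
        intro x
        rw [norm_smul]; simp [abs_of_nonneg (h4 x), h5 x]⟩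
    refine le_trans ?_ (le_iSup _ w)
    rw [tv_int hlam w.2.1 w.2.2.1 hA w.2.2.2.1]
    simp only [w]
    have : -∫ p, ((-ϕ p) • EuclideanSpace.single (1 : Fin 2) (1:ℝ) : E2) 1 ∂(mu lam) =
        ∫ p, ϕ p ∂(mu lam) := by
      simp [integral_neg]
    rw [this, ofReal_integral_eq_lintegral_ofReal
      (h1.continuous.integrable_of_hasCompactSupport h2) (Eventually.of_forall h4)]
    rw [← lintegral_indicator_one hK.measurableSet]
    apply lintegral_mono
    intro x
    by_cases hx : x ∈ K
    · simp [hx, h6 x hx]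
    · simp [hx]

lemma seg_low {y : ℝ} (hy : y ^ 2 = 1 / 2) {ψ : E2 → ℝ} (hc : Continuous ψ)
    (hs : HasCompactSupport ψ) (h0 : ∀ x, 0 ≤ ψ x)
    (h1 : ∀ x ∈ Metric.closedBall (0 : E2) (9/10), ψ x = 1) :
    cc ≤ ∫ x in Ioo (-cc) cc, ψ (PP x y) := by
  have hcp := cc_pos
  have hi : Integrable (fun x => ψ (PP x y)) :=
    ((hc.comp (PPc0 y)).integrable_of_hasCompactSupport (hs.comp_isClosedEmbedding (PP_isom0 y)))
  calc cc = ∫ x in Ioo (-(cc/2)) (cc/2), (1:ℝ) := by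
        simp [max_eq_left hcp.le]
    _ = ∫ x in Ioo (-(cc/2)) (cc/2), ψ (PP x y) := by
        apply setIntegral_congr_fun measurableSet_Ioo
        intro x hx
        simp only
        rw [h1]
        rw [mem_closedBall_zero_iff, EuclideanSpace.norm_eq]
        apply Real.sqrt_le_iff.2 ⟨by norm_num, _⟩
        simp [hy]
        have := cc_sq
        have : x ^ 2 ≤ (cc/2)^2 := by
          apply sq_le_sq.2
          rw [abs_of_pos (half_pos hcp)]
          exact (abs_lt.2 hx).le
        nlinarith
    _ ≤ ∫ x in Ioo (-cc) cc, ψ (PP x y) := by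
        apply setIntegral_mono_set hi.integrableOn
        · exact Eventually.of_forall fun x => h0 _
        · apply LE.le.eventuallyLE
          apply Ioo_subset_Ioo <;> linarith

lemma pi_eq {lam : ℝ} (hlam : lam ∈ Icc (0:ℝ) 1) {πz : Measure E2}
    (hπ : ∀ ϕ : E2 → ℝ, ContDiff ℝ (⊤ : ℕ∞) ϕ → HasCompactSupport ϕ →
      tsupport ϕ ⊆ Metric.ball (0 : E2) 1 → ∫ x, ϕ x ∂πz = ∫ x, ϕ x ∂(mu lam))
    {A : Set E2} (hA : IsOpen A) (hAΩ : A ⊆ Metric.ball (0 : E2) 1) : πz A = mu lam A := by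
  have hIntg : ∀ ϕ : E2 → ℝ, ContDiff ℝ (⊤ : ℕ∞) ϕ → HasCompactSupport ϕ →
      tsupport ϕ ⊆ Metric.ball (0 : E2) 1 →
      (∀ x, 0 ≤ ϕ x) → (∀ x, ϕ x ≤ 1) → Integrable ϕ πz := by
    intro ϕ h1 h2 h3 h4 h5
    obtain ⟨ψ, g1, g2, g3, g4, g5, g6⟩ := exists_cut
      (K := tsupport ϕ ∪ Metric.closedBall 0 (9/10)) (h2.isCompact.union (isCompact_closedBall _ _))
      Metric.isOpen_ball (union_subset h3 (Metric.closedBall_subset_ball (by norm_num)))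
    have hpos : 0 < ∫ x, ψ x ∂πz := by
      rw [hπ ψ g1 g2 g3, mu_integral hlam g1.continuous g2]
      have a1 := seg_low (y := -cc) (by rw [neg_sq, cc_sq]) g1.continuous g2 g4
        (fun x hx => g6 x (Or.inr hx))
      have a2 := seg_low (y := cc) cc_sq g1.continuous g2 g4 (fun x hx => g6 x (Or.inr hx))
      have := cc_pos
      nlinarith [hlam.1, hlam.2, mul_le_mul_of_nonneg_left a1 hlam.1,
        mul_le_mul_of_nonneg_left a2 (sub_nonneg.2 hlam.2)]
    have hψ : Integrable ψ πz := by
      by_contra h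
      rw [integral_undef h] at hpos
      exact lt_irrefl _ hpos
    refine hψ.mono' h1.continuous.aestronglyMeasurable (Eventually.of_forall fun x => ?_)
    rw [Real.norm_eq_abs, abs_of_nonneg (h4 x)]
    by_cases hx : x ∈ tsupport ϕ
    · rw [g6 x (Or.inl hx)]; exact h5 x
    · rw [image_eq_zero_of_notMem_tsupport hx]; exact g4 x
  apply le_antisymm
  · exact measure_open_le_of_integral (fun ϕ h1 h2 h3 h4 h5 => ⟨hIntg ϕ h1 h2 h3 h4 h5,
      h1.continuous.integrable_of_hasCompactSupport h2, hπ ϕ h1 h2 h3⟩) hA hAΩ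
  · exact measure_open_le_of_integral (fun ϕ h1 h2 h3 h4 h5 =>
      ⟨h1.continuous.integrable_of_hasCompactSupport h2, hIntg ϕ h1 h2 h3 h4 h5,
      (hπ ϕ h1 h2 h3).symm⟩) hA hAΩ


lemma green {v : E2 → ℝ} (hv : ContDiff ℝ 1 v) :
    ∫ p in Metric.ball (0 : E2) 1, ⟪zz p, gradient v p⟫ =
      ∫ x in Ioo (-cc) cc, (v (PP x (√(1 - x ^ 2))) - v (PP x (-√(1 - x ^ 2)))) := by
  simp only [inner_zz]
  have hi : IntegrableOn (fun p : E2 => hI (p 0) * fderiv ℝ v p (EuclideanSpace.single 1 1))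
      (Metric.ball (0 : E2) 1) := by
    apply Integrable.bdd_mul (c := 1)
    · exact ((cont_d hv _).continuousOn.integrableOn_compact (isCompact_closedBall (0 : E2) 1)).mono_set
        Metric.ball_subset_closedBall
    · exact (hI_meas.comp (measurable_coord 0)).aestronglyMeasurable
    · exact Eventually.of_forall fun p => hI_bd _
  rw [← integral_indicator Metric.isOpen_ball.measurableSet,
    fub (hi.integrable_indicator Metric.isOpen_ball.measurableSet),
    ← integral_indicator measurableSet_Ioo]
  congr 1; ext x
  by_cases hx : x ∈ Ioo (-cc) cc
  · rw [indicator_of_mem hx]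
    have e : (fun y => (Metric.ball (0 : E2) 1).indicator
        (fun p : E2 => hI (p 0) * fderiv ℝ v p (EuclideanSpace.single 1 1)) (PP x y)) =
        (Ioo (-√(1 - x ^ 2)) (√(1 - x ^ 2))).indicator
          (fun y => fderiv ℝ v (PP x y) (EuclideanSpace.single 1 1)) := by
      ext y
      have : PP x y ∈ Metric.ball (0 : E2) 1 ↔ y ∈ Ioo (-√(1 - x ^ 2)) (√(1 - x ^ 2)) := by
        rw [PP_mem_ball, mem_Ioo, ← Real.sq_lt]
        constructor <;> intro h <;> linarith
      have h1 : hI x = 1 := by simp [hI, abs_lt.2 hx]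
      by_cases hy : y ∈ Ioo (-√(1 - x ^ 2)) (√(1 - x ^ 2))
      · rw [indicator_of_mem hy, indicator_of_mem (this.2 hy)]
        simp [h1]
      · rw [indicator_of_notMem hy, indicator_of_notMem (fun h => hy (this.1 h))]
    rw [e, integral_indicator measurableSet_Ioo, ← integral_Ioc_eq_integral_Ioo,
      ← intervalIntegral.integral_of_le (by linarith [Real.sqrt_nonneg (1 - x ^ 2)])]
    apply intervalIntegral.integral_eq_sub_of_hasDerivAt (f := fun y => v (PP x y))
    · intro y _
      exact hasDerivAt_PP1 hv x y
    · exact ((cont_d hv _).comp (PP_isom1 x).continuous).intervalIntegrable _ _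
  · rw [indicator_of_notMem hx]
    have h0 : hI x = 0 := by
      unfold hI; rw [if_neg]; intro h; exact hx (abs_lt.1 h)
    have : ∀ y, (Metric.ball (0 : E2) 1).indicator
        (fun p : E2 => hI (p 0) * fderiv ℝ v p (EuclideanSpace.single 1 1)) (PP x y) = 0 := by
      intro y
      simp [indicator, h0]
    simp [this]

/-- upper and lower arcs -/
noncomputable def γt (x : ℝ) : E2 := PP x (√(1 - x ^ 2))
/-- lower arc -/
noncomputable def γb (x : ℝ) : E2 := PP x (-√(1 - x ^ 2))

lemma γt_cont : Continuous γt := by unfold γt; simp only [PP_eq]; fun_prop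
lemma γb_cont : Continuous γb := by unfold γb; simp only [PP_eq]; fun_prop

lemma x_sq {x : ℝ} (hx : x ∈ Ioo (-cc) cc) : x ^ 2 < 1 / 2 := by
  rw [← cc_sq]
  apply sq_lt_sq.2
  rw [abs_of_pos cc_pos]; exact abs_lt.2 hx

lemma PP_mem_sphere (x y : ℝ) : PP x y ∈ Metric.sphere (0 : E2) 1 ↔ x ^ 2 + y ^ 2 = 1 := by
  rw [mem_sphere_zero_iff_norm, EuclideanSpace.norm_eq, Real.sqrt_eq_one]
  simp

lemma γt_mem {x : ℝ} (hx : x ∈ Ioo (-cc) cc) : γt x ∈ Metric.sphere (0 : E2) 1 := by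
  have := x_sq hx
  rw [γt, PP_mem_sphere, Real.sq_sqrt (by linarith)]; ring
lemma γb_mem {x : ℝ} (hx : x ∈ Ioo (-cc) cc) : γb x ∈ Metric.sphere (0 : E2) 1 := by
  have := x_sq hx
  rw [γb, PP_mem_sphere, neg_sq, Real.sq_sqrt (by linarith)]; ring

lemma cc_lt_sqrt {x : ℝ} (hx : x ∈ Ioo (-cc) cc) : cc < √(1 - x ^ 2) := by
  apply Real.lt_sqrt_of_sq_lt
  rw [cc_sq]; linarith [x_sq hx]

lemma seg_le {γ : ℝ → E2} (hγ : Continuous γ) (h0 : ∀ x, γ x 0 = x)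
    (hm : ∀ x ∈ Ioo (-cc) cc, γ x ∈ Metric.sphere (0 : E2) 1) {B : Set E2} (hB : MeasurableSet B) :
    seg γ B ≤ (μH[1]).restrict (Metric.sphere (0 : E2) 1) B := by
  rw [seg, Measure.map_apply hγ.measurable hB, Measure.restrict_apply (hγ.measurable hB),
    Measure.restrict_apply hB, ← hausdorffMeasure_real]
  have hl : LipschitzWith 1 (fun p : E2 => p 0) := by
    apply LipschitzWith.of_dist_le_mul
    intro p q
    rw [NNReal.coe_one, one_mul, dist_eq_norm, dist_eq_norm]
    exact PiLp.norm_apply_le (p - q) 0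
  calc μH[1] (γ ⁻¹' B ∩ Ioo (-cc) cc)
      = μH[1] ((fun p : E2 => p 0) '' (γ '' (γ ⁻¹' B ∩ Ioo (-cc) cc))) := by
        rw [image_image]; simp [h0]
    _ ≤ μH[1] (γ '' (γ ⁻¹' B ∩ Ioo (-cc) cc)) := by
        simpa using hl.hausdorffMeasure_image_le zero_le_one (γ '' (γ ⁻¹' B ∩ Ioo (-cc) cc))
    _ ≤ μH[1] (B ∩ Metric.sphere (0 : E2) 1) := by
        apply measure_mono
        rintro _ ⟨x, ⟨hx1, hx2⟩, rfl⟩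
        exact ⟨hx1, hm x hx2⟩

lemma sphere_fin : (μH[1] : Measure E2) (Metric.sphere (0 : E2) 1) < ⊤ := by
  have hl : LipschitzWith 2 (fun t : ℝ => PP (Real.cos t) (Real.sin t)) := by
    apply LipschitzWith.of_dist_le_mul
    intro a b
    rw [EuclideanSpace.dist_eq]
    apply Real.sqrt_le_iff.2 ⟨by positivity, _⟩
    simp only [Fin.sum_univ_two, PP0, PP1]
    have h1 : dist (Real.cos a) (Real.cos b) ≤ dist a b := by
      simpa using Real.lipschitzWith_cos.dist_le_mul a b
    have h2 : dist (Real.sin a) (Real.sin b) ≤ dist a b := by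
      simpa using Real.lipschitzWith_sin.dist_le_mul a b
    have h3 := pow_le_pow_left₀ dist_nonneg h1 2
    have h4 := pow_le_pow_left₀ dist_nonneg h2 2
    have := sq_nonneg (dist a b)
    push_cast
    nlinarith
  have hsub : Metric.sphere (0 : E2) 1 ⊆
      (fun t : ℝ => PP (Real.cos t) (Real.sin t)) '' Icc (-Real.pi) Real.pi := by
    intro p hp
    rw [← PP_eta p, PP_mem_sphere] at hp
    let w : ℂ := ⟨p 0, p 1⟩
    have hw : ‖w‖ = 1 := by
      rw [Complex.norm_def, Complex.normSq_apply, Real.sqrt_eq_one]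
      simp only [w]; nlinarith
    have hw0 : w ≠ 0 := by intro h; simp [h] at hw
    refine ⟨Complex.arg w, ⟨(Complex.neg_pi_lt_arg w).le, Complex.arg_le_pi w⟩, ?_⟩
    simp only
    rw [Complex.cos_arg hw0, Complex.sin_arg, hw]
    simp only [w, div_one]
    exact PP_eta p
  calc _ ≤ _ := measure_mono hsub
    _ ≤ _ := hl.hausdorffMeasure_image_le zero_le_one _
    _ < ⊤ := by
      rw [hausdorffMeasure_real, Real.volume_Icc]
      apply ENNReal.mul_lt_top
      · simp
      · exact ENNReal.ofReal_lt_top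

lemma ntz_integrable {σ : Measure E2} {ntz : E2 → ℝ}
    (hn : ∀ v : E2 → ℝ, ContDiff ℝ 1 v →
      ∫ x in Ioo (-cc) cc, (v (γt x) - v (γb x)) = ∫ x, ntz x * v x ∂σ) : Integrable ntz σ := by
  have hpos : 0 < ∫ x in Ioo (-cc) cc, (2 * √(1 - x ^ 2)) := by
    have hc : Continuous (fun x : ℝ => 2 * √(1 - x ^ 2)) := by fun_prop
    have hi : IntegrableOn (fun x : ℝ => 2 * √(1 - x ^ 2)) (Ioo (-cc) cc) :=
      (hc.continuousOn.integrableOn_compact isCompact_Icc).mono_set Ioo_subset_Icc_self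
    have := cc_pos
    calc 0 < ∫ x in Ioo (-cc) cc, cc := by
          simp only [integral_const, smul_eq_mul]
          apply mul_pos _ cc_pos
          simp [this]
      _ ≤ _ := by
          apply setIntegral_mono_on _ hi measurableSet_Ioo
          · intro x hx
            linarith [cc_lt_sqrt hx]
          · exact integrableOn_const (by simp)
  have h : ∀ a : ℝ, Integrable (fun p : E2 => ntz p * (p 1 + a)) σ := by
    intro a
    have := hn (fun p => p 1 + a) (by fun_prop)
    by_contra hh
    rw [integral_undef hh] at this
    have e : ∀ x : ℝ, (γt x 1 + a - (γb x 1 + a)) = 2 * √(1 - x ^ 2) := by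
      intro x; simp [γt, γb]; ring
    simp only [e] at this
    exact hpos.ne' this
  have := (h 1).sub (h 0)
  refine this.congr (Eventually.of_forall fun p => ?_)
  simp; ring

lemma ntz_set {σ : Measure E2} [IsFiniteMeasure σ] {ntz : E2 → ℝ} 
    (hn : ∀ v : E2 → ℝ, ContDiff ℝ 1 v →
      ∫ x in Ioo (-cc) cc, (v (γt x) - v (γb x)) = ∫ x, ntz x * v x ∂σ) {B : Set E2}
    (hB : MeasurableSet B) : ∫ x in B, ntz x ∂σ = (seg γt).real B - (seg γb).real B := by
  have hIntg := ntz_integrable hn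
  let νp := σ.withDensity (fun x => ENNReal.ofReal (ntz x))
  let νm := σ.withDensity (fun x => ENNReal.ofReal (-ntz x))
  have : IsFiniteMeasure νp := isFiniteMeasure_withDensity_ofReal hIntg.2
  have : IsFiniteMeasure νm := isFiniteMeasure_withDensity_ofReal hIntg.neg.2
  have hm : ∀ ϕ : E2 → ℝ, ContDiff ℝ (⊤ : ℕ∞) ϕ → HasCompactSupport ϕ →
      ∫ x, ϕ x ∂(νp + seg γb) = ∫ x, ϕ x ∂(νm + seg γt) := by
    intro ϕ h1 h2
    have h1' : ContDiff ℝ 1 ϕ := h1.of_le (by exact_mod_cast le_top)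
    have hi : ∀ (m : Measure E2) [IsFiniteMeasure m], Integrable ϕ m := fun m _ =>
      h1.continuous.integrable_of_hasCompactSupport h2
    rw [integral_add_measure (hi _) (hi _), integral_add_measure (hi _) (hi _),
      seg_integral γb_cont h1.continuous, seg_integral γt_cont h1.continuous]
    have hOnI : ∀ γ : ℝ → E2, Continuous γ → IntegrableOn (fun x => ϕ (γ x)) (Ioo (-cc) cc) :=
      fun γ hγ => ((h1.continuous.comp hγ).continuousOn.integrableOn_compact isCompact_Icc).mono_set
        Ioo_subset_Icc_self
    have hg := hn ϕ h1'
    rw [integral_sub (hOnI _ γt_cont) (hOnI _ γb_cont)] at hg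
    obtain ⟨C, hC⟩ := h2.exists_bound_of_continuous h1.continuous
    have hb : ∀ k : E2 → ℝ, Integrable k σ → Integrable (fun x => k x * ϕ x) σ := fun k hk =>
      hk.mul_bdd (c := C) h1.continuous.aestronglyMeasurable (Eventually.of_forall hC)
    have ep : ∫ x, ϕ x ∂νp = ∫ x, (max (ntz x) 0) * ϕ x ∂σ := by
      simp only [νp]
      rw [integral_withDensity_eq_integral_toReal_smul₀ hIntg.1.aemeasurable.ennreal_ofReal
        (Eventually.of_forall fun x => ENNReal.ofReal_lt_top)]
      simp [ENNReal.toReal_ofReal']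
    have em : ∫ x, ϕ x ∂νm = ∫ x, (max (-ntz x) 0) * ϕ x ∂σ := by
      simp only [νm]
      have ha : AEMeasurable (fun x => ENNReal.ofReal (-ntz x)) σ :=
        hIntg.1.aemeasurable.neg.ennreal_ofReal
      rw [integral_withDensity_eq_integral_toReal_smul₀ ha
        (Eventually.of_forall fun x => ENNReal.ofReal_lt_top)]
      simp [ENNReal.toReal_ofReal']
    have : ∫ x, ntz x * ϕ x ∂σ = ∫ x, (max (ntz x) 0) * ϕ x ∂σ - ∫ x, (max (-ntz x) 0) * ϕ x ∂σ := by
      rw [← integral_sub (hb _ hIntg.pos_part) (hb _ hIntg.neg_part)]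
      congr 1; ext x
      rw [← sub_mul]
      congr 1
      rcases le_total 0 (ntz x) with h | h
      · rw [max_eq_left h, max_eq_right (by linarith)]; ring
      · rw [max_eq_right h, max_eq_left (by linarith)]; ring
    rw [ep, em]; linarith
  have hE : (νp + seg γb) B = (νm + seg γt) B := by
    apply measure_eq_of_open isOpen_univ (measure_lt_top _ _) _ hB (subset_univ _)
    intro A hA _
    have hi : ∀ (m : Measure E2) [IsFiniteMeasure m], ∀ ϕ : E2 → ℝ, ContDiff ℝ (⊤ : ℕ∞) ϕ →
      HasCompactSupport ϕ → Integrable ϕ m := fun m _ ϕ h1 h2 =>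
      h1.continuous.integrable_of_hasCompactSupport h2
    apply le_antisymm
    · exact measure_open_le_of_integral (Ω := univ) (fun ϕ h1 h2 _ _ _ =>
        ⟨hi _ ϕ h1 h2, hi _ ϕ h1 h2, hm ϕ h1 h2⟩) hA (subset_univ _)
    · exact measure_open_le_of_integral (Ω := univ) (fun ϕ h1 h2 _ _ _ =>
        ⟨hi _ ϕ h1 h2, hi _ ϕ h1 h2, (hm ϕ h1 h2).symm⟩) hA (subset_univ _)
  have hR := congrArg ENNReal.toReal hE
  simp only [Measure.coe_add, Pi.add_apply] at hR
  rw [ENNReal.toReal_add (measure_ne_top _ _) (measure_ne_top _ _),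
    ENNReal.toReal_add (measure_ne_top _ _) (measure_ne_top _ _)] at hR
  rw [integral_eq_lintegral_pos_part_sub_lintegral_neg_part hIntg.integrableOn,
    ← withDensity_apply _ hB, ← withDensity_apply _ hB]
  simp only [Measure.real]
  linarith

lemma seg_null {γ : ℝ → E2} (hγ : Continuous γ) {B : Set E2} (hB : MeasurableSet B)
    (h : ∀ x ∈ Ioo (-cc) cc, γ x ∉ B) : (seg γ).real B = 0 := by
  rw [Measure.real, seg, Measure.map_apply hγ.measurable hB,
    Measure.restrict_apply (hγ.measurable hB)]
  have : γ ⁻¹' B ∩ Ioo (-cc) cc = ∅ := by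
    ext x
    simp only [mem_inter_iff, mem_preimage, mem_empty_iff_false, iff_false]
    rintro ⟨a, b⟩
    exact h x b a
  simp [this]

lemma trace_eq {u : E2 → ℝ} {a t : ℝ} {p : E2} (hp : p ∈ Metric.sphere (0 : E2) 1)
    {V : Set E2} (hV : IsOpen V) (hpV : p ∈ V) (hu : ∀ y ∈ V, u y = a)
    (h : Tendsto (fun r => (∫ y in Metric.ball p r ∩ Metric.ball (0 : E2) 1, |u y - t|) /
        (volume (Metric.ball p r ∩ Metric.ball (0 : E2) 1)).toReal)
        (nhdsWithin 0 (Ioi 0)) (nhds 0)) : t = a := by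
  obtain ⟨ε, hε, hεV⟩ := Metric.isOpen_iff.1 hV p hpV
  have hev : ∀ᶠ r in nhdsWithin (0:ℝ) (Ioi 0),
      (∫ y in Metric.ball p r ∩ Metric.ball (0 : E2) 1, |u y - t|) /
        (volume (Metric.ball p r ∩ Metric.ball (0 : E2) 1)).toReal = |a - t| := by
    filter_upwards [Ioo_mem_nhdsGT hε] with r hr
    have hm : MeasurableSet (Metric.ball p r ∩ Metric.ball (0 : E2) 1) :=
      measurableSet_ball.inter measurableSet_ball
    rw [setIntegral_congr_fun (g := fun _ => |a - t|) hm]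
    · have hfin : volume (Metric.ball p r ∩ Metric.ball (0 : E2) 1) ≠ ⊤ :=
        ((measure_mono inter_subset_left).trans_lt measure_ball_lt_top).ne
      have hpos : volume (Metric.ball p r ∩ Metric.ball (0 : E2) 1) ≠ 0 := by
        apply (IsOpen.measure_pos _ (Metric.isOpen_ball.inter Metric.isOpen_ball) _).ne'
        have hcl : p ∈ closure (Metric.ball (0 : E2) 1) := by
          rw [closure_ball _ one_ne_zero]; exact Metric.sphere_subset_closedBall hp
        exact mem_closure_iff.1 hcl _ Metric.isOpen_ball (Metric.mem_ball_self hr.1)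
      have : (volume (Metric.ball p r ∩ Metric.ball (0 : E2) 1)).toReal ≠ 0 :=
        ENNReal.toReal_ne_zero.2 ⟨hpos, hfin⟩
      simp only [integral_const, smul_eq_mul, Measure.real, Measure.restrict_apply_univ]
      field_simp
    · intro y hy
      simp only
      rw [hu y (hεV (Metric.ball_subset_ball hr.2.le hy.1))]
  have h2 := (tendsto_congr' hev).1 h
  have h3 := tendsto_nhds_unique h2 tendsto_const_nhds
  have := abs_eq_zero.1 h3.symm
  linarith

/-- Brothers–Marcellini-type non-uniqueness on the disk. On
`Ω = B(0,1) ⊂ ℝ²` with `Γ = {|y| > 1/√2} ∩ ∂Ω`, `f = 0` on `{y < −1/√2}`, `f = 1`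
on `{y > 1/√2}`, for every `λ ∈ [0,1]` the function `u_λ` (equal to `0`, `λ`, `1`
in the three horizontal strips) together with the vector field `z = (0,1)` on
`{|x| < 1/√2}` and `z = 0` on `{|x| > 1/√2}` satisfies all four conditions of the
1-Laplace formulation. The total variation measure `TVμ = |Du_λ|`, the Anzellotti
pairing measure `πz = (z,Du_λ)`, the trace `Tu` and the normal trace `ntz = [z,ν]`
are characterized by their defining properties, stated as hypotheses. -/
theorem disk_brothers_marcellini_oneLaplace
    (Ω : Set E2) (hΩ : Ω = Metric.ball (0 : E2) 1)
    (Γ : Set E2) (hΓ : Γ = {p : E2 | p ∈ frontier Ω ∧ (Real.sqrt 2)⁻¹ < |p 1|})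
    (f : E2 → ℝ) (hf : f = fun p => if 0 < p 1 then (1:ℝ) else 0)
    (σ : Measure E2) (hσ : σ = (μH[1]).restrict (frontier Ω))
    (lam : ℝ) (hlam : lam ∈ Icc (0:ℝ) 1)
    (u : E2 → ℝ) (hu : u = fun p => if p 1 < -(Real.sqrt 2)⁻¹ then 0
      else if p 1 ≤ (Real.sqrt 2)⁻¹ then lam else 1)
    (z : E2 → E2) (hz : z = fun p => if |p 0| < (Real.sqrt 2)⁻¹ then
      EuclideanSpace.single (1 : Fin 2) (1:ℝ) else 0)
    -- the total variation measure |Du_λ| on Ω, via the defining sup formula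
    (TVμ : Measure E2) (hTVc : TVμ Ωᶜ = 0)
    (hTV : ∀ A : Set E2, IsOpen A → A ⊆ Ω →
      TVμ A = ⨆ w : {w : E2 → E2 // ContDiff ℝ 1 w ∧ HasCompactSupport w ∧
          tsupport w ⊆ A ∧ ∀ x, ‖w x‖ ≤ 1},
        ENNReal.ofReal (∫ x in A, u x * div2 w.1 x))
    -- the Anzellotti pairing measure (z,Du_λ), via its distributional definition
    (πz : Measure E2) (hπc : πz Ωᶜ = 0)
    (hπ : ∀ ϕ : E2 → ℝ, ContDiff ℝ (⊤ : ℕ∞) ϕ → HasCompactSupport ϕ → tsupport ϕ ⊆ Ω →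
      ∫ x, ϕ x ∂πz = -∫ x in Ω, u x * ⟪z x, gradient ϕ x⟫)
    -- the BV boundary trace of u_λ, via its a.e. averaged characterization
    (Tu : E2 → ℝ)
    (hTu : ∀ᵐ p ∂σ, Tendsto
      (fun r => (∫ y in Metric.ball p r ∩ Ω, |u y - Tu p|) /
        (volume (Metric.ball p r ∩ Ω)).toReal) (nhdsWithin 0 (Ioi 0)) (nhds 0))
    -- the normal trace [z,ν], via Anzellotti's Green formula (div z = 0)
    (ntz : E2 → ℝ)
    (hntz : ∀ v : E2 → ℝ, ContDiff ℝ 1 v →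
      ∫ x in Ω, ⟪z x, gradient v x⟫ = ∫ x, ntz x * v x ∂σ) :
    (∀ p, ‖z p‖ ≤ 1) ∧
    DivFreeOn Ω z ∧
    (∀ A : Set E2, MeasurableSet A → A ⊆ Ω → πz A = TVμ A) ∧
    (∀ᵐ x ∂σ.restrict Γ, |ntz x| ≤ 1 ∧ ntz x * (f x - Tu x) = |f x - Tu x|) ∧
    (∀ᵐ x ∂σ.restrict (frontier Ω \ Γ), ntz x = 0) := by
  subst hΩ
  have hz' : z = zz := hz
  have hu' : u = fun p => UU lam (p 1) := hu
  have hfr : frontier (Metric.ball (0 : E2) 1) = Metric.sphere 0 1 := frontier_ball _ one_ne_zero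
  rw [hfr] at hσ hΓ ⊢
  have hσf : IsFiniteMeasure σ := ⟨by rw [hσ, Measure.restrict_apply_univ]; exact sphere_fin⟩
  clear hz
  subst hz'
  have hn : ∀ v : E2 → ℝ, ContDiff ℝ 1 v →
      ∫ x in Ioo (-cc) cc, (v (γt x) - v (γb x)) = ∫ x, ntz x * v x ∂σ := by
    intro v hv
    rw [← hntz v hv, green hv]; rfl
  have hIntg := ntz_integrable hn
  have ht : ∀ B : Set E2, MeasurableSet B → (seg γt).real B ≤ σ.real B := fun B hB =>
    ENNReal.toReal_mono (measure_ne_top _ _) (by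
      rw [hσ]; exact seg_le γt_cont (fun x => by simp [γt]) (fun x hx => γt_mem hx) hB)
  have hb : ∀ B : Set E2, MeasurableSet B → (seg γb).real B ≤ σ.real B := fun B hB =>
    ENNReal.toReal_mono (measure_ne_top _ _) (by
      rw [hσ]; exact seg_le γb_cont (fun x => by simp [γb]) (fun x hx => γb_mem hx) hB)
  have hS : MeasurableSet (Metric.sphere (0 : E2) 1) := Metric.isClosed_sphere.measurableSet
  have hΓm : MeasurableSet Γ := by
    rw [hΓ]
    exact hS.inter (measurableSet_lt measurable_const (measurable_coord 1).abs)
  refine ⟨?_, divfree, ?_, ?_, ?_⟩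
  · intro p
    unfold zz
    split_ifs <;> simp
  · intro A hA hAΩ
    apply measure_eq_of_open Metric.isOpen_ball _ _ hA hAΩ
    · rw [pi_eq hlam _ Metric.isOpen_ball subset_rfl]
      · exact measure_lt_top _ _
      · intro ϕ h1 h2 h3
        rw [hπ ϕ h1 h2 h3, hu', pairing hlam h1 h2 h3]
    · intro A hA hAΩ
      rw [hTV A hA hAΩ, hu', tv_eq hlam hA hAΩ]
      apply pi_eq hlam _ hA hAΩ
      intro ϕ h1 h2 h3
      rw [hπ ϕ h1 h2 h3, hu', pairing hlam h1 h2 h3]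
  · have hle : ∀ᵐ x ∂σ, ntz x ≤ 1 := by
      apply ae_le_of_forall_setIntegral_le hIntg (integrable_const _)
      intro B hB _
      rw [ntz_set hn hB, setIntegral_const]
      simp only [smul_eq_mul, mul_one]
      linarith [ht B hB, measureReal_nonneg (μ := seg γb) (s := B)]
    have hge : ∀ᵐ x ∂σ, -1 ≤ ntz x := by
      apply ae_le_of_forall_setIntegral_le (integrable_const _) hIntg
      intro B hB _
      rw [ntz_set hn hB, setIntegral_const]
      simp only [smul_eq_mul]
      linarith [hb B hB, measureReal_nonneg (μ := seg γt) (s := B)]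
    filter_upwards [ae_restrict_of_ae hle, ae_restrict_of_ae hge, ae_restrict_of_ae hTu,
      ae_restrict_mem hΓm] with p h1 h2 h3 h4
    refine ⟨abs_le.2 ⟨h2, h1⟩, ?_⟩
    rw [hΓ] at h4
    obtain ⟨h4, h5⟩ := h4
    have hcp := cc_pos
    change cc < |p 1| at h5
    have hfT : f p = Tu p := by
      rcases lt_abs.1 h5 with h | h
      · have : Tu p = 1 := by
          refine trace_eq (V := {q : E2 | cc < q 1}) h4
            (isOpen_lt continuous_const (by fun_prop)) h ?_ h3
          intro q (hq : cc < q 1)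
          rw [hu']
          simp only [UU]
          rw [if_neg (by linarith), if_neg (by linarith)]
        rw [this, hf]
        simp only
        rw [if_pos (by linarith)]
      · have : Tu p = 0 := by
          refine trace_eq (V := {q : E2 | q 1 < -cc}) h4
            (isOpen_lt (by fun_prop) continuous_const) (by simp only [mem_ofPred_eq]; linarith) ?_ h3
          intro q (hq : q 1 < -cc)
          rw [hu']
          simp only [UU]
          rw [if_pos hq]
        rw [this, hf]
        simp only
        rw [if_neg (by linarith)]
    simp [hfT]
  · have hT : MeasurableSet (Metric.sphere (0 : E2) 1 \ Γ) := hS.diff hΓm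
    apply Integrable.ae_eq_zero_of_forall_setIntegral_eq_zero hIntg.integrableOn
    intro B hB _
    rw [Measure.restrict_restrict hB, ntz_set hn (hB.inter hT), seg_null γt_cont (hB.inter hT),
      seg_null γb_cont (hB.inter hT), sub_zero]
    · intro x hx hh
      apply hh.2.2
      rw [hΓ]
      refine ⟨γb_mem hx, ?_⟩
      change cc < _
      simp only [γb, PP1, abs_neg]
      exact (cc_lt_sqrt hx).trans_le (le_abs_self _)
    · intro x hx hh
      apply hh.2.2
      rw [hΓ]
      refine ⟨γt_mem hx, ?_⟩
      change cc < _
      simp only [γt, PP1]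
      exact (cc_lt_sqrt hx).trans_le (le_abs_self _)
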